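/- Let d, k ≥ 1 and n ≥ 2. Then the canonical epimorphism Ψ : TM(ℤ^d,n,k) → TM_fix(ℤ^d,n,k) is an isomorphism of monoids, and it restricts to a group isomorphism from RTM(ℤ^d,n,k) onto RTM_fix(ℤ^d,n,k). -/

import Mathlib

open Function

/-- `ℤ^d`. -/
abbrev V (d : ℕ) : Type := Fin d → ℤ

/-- A head configuration is valid if it carries at most one head. -/
def headOk {d k : ℕ} (y : V d → Option (Fin k)) : Prop :=
  ∀ u v : V d, (y u).isSome → (y v).isSome → u = v

/-- The space `X_{n,k}`: a tape in `Σ^{ℤ^d}` together with at most one head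
carrying a state in `Q = Fin k`. -/
abbrev X (d n k : ℕ) : Type :=
  { c : (V d → Fin n) × (V d → Option (Fin k)) // headOk c.2 }

/-- `DefinedBy F F' f T` : `T` is the moving-head Turing machine defined by the
local rule `f`, reading the tape on the window `F`, writing on the window `F'`,
changing the state and moving the head. -/
def DefinedBy {d n k : ℕ} (F F' : Finset (V d))
    (f : (V d → Fin n) → Fin k → (V d → Fin n) × Fin k × V d)
    (T : X d n k → X d n k) : Prop :=
  -- `f` only depends on the restriction of the tape to `F`, and only the
  -- restriction of its tape output to `F'` matters:
  (∀ x x' q, (∀ v ∈ F, x v = x' v) →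
      (∀ v ∈ F', (f x q).1 v = (f x' q).1 v) ∧ (f x q).2 = (f x' q).2) ∧
  -- a configuration with no head is fixed:
  (∀ c : X d n k, (∀ v, c.val.2 v = none) → T c = c) ∧
  -- if the head is at `v` in state `q`, apply the local rule there:
  (∀ (c : X d n k) (v : V d) (q : Fin k), c.val.2 v = some q →
    (∀ t, (T c).val.1 t =
      if t - v ∈ F' then (f (fun u => c.val.1 (u + v)) q).1 (t - v) else c.val.1 t) ∧
    (∀ t, (T c).val.2 t =
      if t = v + (f (fun u => c.val.1 (u + v)) q).2.2
      then some (f (fun u => c.val.1 (u + v)) q).2.1 else none))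

/-- A moving-head `(d,n,k)`-Turing machine. -/
def IsTM {d n k : ℕ} (T : X d n k → X d n k) : Prop :=
  ∃ F F' f, DefinedBy F F' f T

/-- A reversible moving-head Turing machine: a Turing machine admitting a
Turing machine inverse. -/
def IsRTM {d n k : ℕ} (T : X d n k → X d n k) : Prop :=
  IsTM T ∧ ∃ S : X d n k → X d n k, IsTM S ∧ S ∘ T = id ∧ T ∘ S = id
/-- The configuration space `Σ^{ℤ^d} × Q` of the moving-tape model. -/
abbrev Cfg (d n k : ℕ) : Type := (V d → Fin n) × Fin k

/-- `TapeDefinedBy F F' f T` : `T` is the moving-tape Turing machine defined by the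
local rule `f`: if `f(x|_F, q) = (p, q', u)` then `T(x,q) = (σ_u y, q')` where `y`
agrees with `x` outside `F'` and equals `p` on `F'`. -/
def TapeDefinedBy {d n k : ℕ} (F F' : Finset (V d))
    (f : (V d → Fin n) → Fin k → (V d → Fin n) × Fin k × V d)
    (T : Cfg d n k → Cfg d n k) : Prop :=
  -- `f` only depends on the restriction of the tape to `F`, and only the
  -- restriction of its tape output to `F'` matters:
  (∀ x x' q, (∀ v ∈ F, x v = x' v) →
      (∀ v ∈ F', (f x q).1 v = (f x' q).1 v) ∧ (f x q).2 = (f x' q).2) ∧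
  -- the machine equation:
  (∀ (x : V d → Fin n) (q : Fin k),
    (T (x, q)).2 = (f x q).2.1 ∧
    ∀ t, (T (x, q)).1 t =
      if t - (f x q).2.2 ∈ F' then (f x q).1 (t - (f x q).2.2)
      else x (t - (f x q).2.2))

/-- A moving-tape `(d,n,k)`-Turing machine. -/
def IsTMfix {d n k : ℕ} (T : Cfg d n k → Cfg d n k) : Prop :=
  ∃ F F' f, TapeDefinedBy F F' f T


/-- The moving-head configuration with tape `x` and a head in state `q` at the origin. -/
def emb {d n k : ℕ} (x : V d → Fin n) (q : Fin k) : X d n k :=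
  ⟨(x, fun t => if t = 0 then some q else none), by
    intro u w hu hw
    by_cases h1 : u = 0
    · by_cases h2 : w = 0
      · rw [h1, h2]
      · simp [h2] at hw
    · simp [h1] at hu⟩

/-- `PsiRel T T'` : `T'` is the image of the moving-head machine `T` under the
canonical map `Ψ`: `Ψ(T)(x,q) = (σ_{-v}(x'), q')` where `T` applied to the
configuration with tape `x` and head in state `q` at the origin yields tape `x'`
and head in state `q'` at position `v`. -/
def PsiRel {d n k : ℕ} (T : X d n k → X d n k) (T' : Cfg d n k → Cfg d n k) : Prop :=
  ∀ (x : V d → Fin n) (q : Fin k) (v : V d) (q' : Fin k),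
    (T (emb x q)).val.2 v = some q' →
    T' (x, q) = (fun t => (T (emb x q)).val.1 (t + v), q')

/-- The monoid `TM(ℤ^d,n,k)` of moving-head Turing machines, as a submonoid of
`Function.End (X d n k)` (function composition). -/
def TMmon (d n k : ℕ) : Submonoid (Function.End (X d n k)) :=
  Submonoid.closure {T : Function.End (X d n k) | IsTM (T : X d n k → X d n k)}

/-- The monoid `TM_fix(ℤ^d,n,k)` of moving-tape Turing machines. -/
def TMfixmon (d n k : ℕ) : Submonoid (Function.End (Cfg d n k)) :=
  Submonoid.closure {T : Function.End (Cfg d n k) | IsTMfix (T : Cfg d n k → Cfg d n k)}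

namespace PsiAux

abbrev Rule (d n k : ℕ) : Type := (V d → Fin n) → Fin k → (V d → Fin n) × Fin k × V d

def embAt {d n k : ℕ} (x : V d → Fin n) (v : V d) (q : Fin k) : X d n k :=
  ⟨(x, fun t => if t = v then some q else none), by
    intro u w hu hw
    by_cases h1 : u = v
    · by_cases h2 : w = v
      · rw [h1, h2]
      · simp [h2] at hw
    · simp [h1] at hu⟩

theorem eq_embAt {d n k : ℕ} (c : X d n k) (v : V d) (q : Fin k) (h : c.val.2 v = some q) :
    c = embAt c.val.1 v q := by
  apply Subtype.ext
  apply Prod.ext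
  · rfl
  · funext t
    show c.val.2 t = if t = v then some q else none
    split_ifs with ht
    · rw [ht, h]
    · by_contra hne
      apply ht
      apply c.2 t v
      · exact Option.isSome_iff_ne_none.2 hne
      · rw [h]; rfl

theorem emb_eq {d n k : ℕ} (x : V d → Fin n) (q : Fin k) : emb x q = embAt x 0 q := rfl

theorem embAt_inj {d n k : ℕ} {x y : V d → Fin n} {v w : V d} {q r : Fin k}
    (h : embAt x v q = embAt y w r) : x = y ∧ v = w ∧ q = r := by
  have h1 : x = y := congrArg (fun c : X d n k => c.val.1) h
  have h2 : (if v = v then some q else none) = (if v = w then some r else none) :=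
    congrFun (congrArg (fun c : X d n k => c.val.2) h) v
  by_cases hv : v = w
  · simp [hv] at h2
    exact ⟨h1, hv, h2⟩
  · simp [hv] at h2

def Desc {d n k : ℕ} (g : Rule d n k) (T : X d n k → X d n k) : Prop :=
  (∀ c : X d n k, (∀ v, c.val.2 v = none) → T c = c) ∧
  ∀ x v q, T (embAt x v q) = embAt (fun t => (g (fun u => x (u + v)) q).1 (t - v))
    (v + (g (fun u => x (u + v)) q).2.2) (g (fun u => x (u + v)) q).2.1

def fixOf {d n k : ℕ} (g : Rule d n k) : Cfg d n k → Cfg d n k :=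
  fun c => (fun t => (g c.1 c.2).1 (t + (g c.1 c.2).2.2), (g c.1 c.2).2.1)

open Classical in
noncomputable def headOf {d n k : ℕ} (g : Rule d n k) : X d n k → X d n k :=
  fun c => if h : ∃ p : V d × Fin k, c.val.2 p.1 = some p.2 then
    embAt (fun t => (g (fun u => c.val.1 (u + h.choose.1)) h.choose.2).1 (t - h.choose.1))
    (h.choose.1 + (g (fun u => c.val.1 (u + h.choose.1)) h.choose.2).2.2)
    (g (fun u => c.val.1 (u + h.choose.1)) h.choose.2).2.1 else c

theorem desc_headOf {d n k : ℕ} (g : Rule d n k) : Desc g (headOf g) := by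
  refine ⟨?_, ?_⟩
  · intro c hc
    unfold headOf
    rw [dif_neg]
    rintro ⟨p, hp⟩
    rw [hc] at hp
    simp at hp
  · intro x v q
    have h : ∃ p : V d × Fin k, (embAt x v q : X d n k).val.2 p.1 = some p.2 :=
      ⟨(v, q), by simp [embAt]⟩
    unfold headOf
    rw [dif_pos h]
    have h2 := embAt_inj (eq_embAt _ _ _ h.choose_spec)
    rw [← h2.2.1, ← h2.2.2]
    rfl

def Nice {d n k : ℕ} (g : Rule d n k) : Prop :=
  (∀ x q, ∃ D : Finset (V d), ∀ t, t ∉ D → (g x q).1 t = x t) ∧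
  (∀ x q (E : Finset (V d)), ∃ F : Finset (V d), ∀ y, (∀ v ∈ F, x v = y v) →
    (∀ v ∈ E, (g x q).1 v = (g y q).1 v) ∧ (g x q).2 = (g y q).2)

def Pair {d n k : ℕ} (T : X d n k → X d n k) (T' : Cfg d n k → Cfg d n k) : Prop :=
  ∃ g : Rule d n k, Nice g ∧ Desc g T ∧ T' = fixOf g

theorem cases_cfg {d n k : ℕ} (c : X d n k) :
    (∀ v, c.val.2 v = none) ∨ ∃ x v q, c = embAt x v q := by
  by_cases h : ∀ v, c.val.2 v = none
  · exact Or.inl h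
  · push Not at h
    obtain ⟨v, hv⟩ := h
    obtain ⟨q, hq⟩ := Option.ne_none_iff_exists'.1 hv
    exact Or.inr ⟨_, v, q, eq_embAt c v q hq⟩

def modRule {d n k : ℕ} (F' : Finset (V d)) (f : Rule d n k) : Rule d n k :=
  fun x q => (fun t => if t ∈ F' then (f x q).1 t else x t, (f x q).2)

theorem definedBy_iff {d n k : ℕ} (F F' : Finset (V d)) (f : Rule d n k) (T : X d n k → X d n k) :
    DefinedBy F F' f T ↔ (∀ x x' q, (∀ v ∈ F, x v = x' v) →
      (∀ v ∈ F', (f x q).1 v = (f x' q).1 v) ∧ (f x q).2 = (f x' q).2) ∧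
      Desc (modRule F' f) T := by
  unfold DefinedBy Desc
  refine and_congr_right fun _ => and_congr_right fun _ => ?_
  constructor
  · intro h x v q
    obtain ⟨h1, h2⟩ := h (embAt x v q) v q (by simp [embAt])
    apply Subtype.ext
    apply Prod.ext
    · funext t
      rw [h1]
      simp [embAt, modRule]
    · funext t
      rw [h2]
      rfl
  · intro h c v q hc
    have h1 := h c.val.1 v q
    rw [← eq_embAt c v q hc] at h1
    rw [h1]
    simp [embAt, modRule]

theorem nice_modRule {d n k : ℕ} {F F' : Finset (V d)} {f : Rule d n k}
    (h : ∀ x x' q, (∀ v ∈ F, x v = x' v) →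
      (∀ v ∈ F', (f x q).1 v = (f x' q).1 v) ∧ (f x q).2 = (f x' q).2) :
    Nice (modRule F' f) := by
  classical
  refine ⟨fun x q => ⟨F', fun t ht => by simp [modRule, ht]⟩, fun x q E => ⟨F ∪ E, ?_⟩⟩
  intro y hy
  have h1 := h x y q (fun v hv => hy v (Finset.mem_union_left _ hv))
  refine ⟨fun v hv => ?_, h1.2⟩
  simp only [modRule]
  split_ifs with hF
  · exact h1.1 v hF
  · exact hy v (Finset.mem_union_right _ hv)

def negRule {d n k : ℕ} (f : Rule d n k) : Rule d n k :=
  fun x q => ((f x q).1, (f x q).2.1, - (f x q).2.2)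

theorem tapeDefinedBy_iff {d n k : ℕ} (F F' : Finset (V d)) (f : Rule d n k)
    (T : Cfg d n k → Cfg d n k) :
    TapeDefinedBy F F' f T ↔ (∀ x x' q, (∀ v ∈ F, x v = x' v) →
      (∀ v ∈ F', (f x q).1 v = (f x' q).1 v) ∧ (f x q).2 = (f x' q).2) ∧
      T = fixOf (modRule F' (negRule f)) := by
  unfold TapeDefinedBy
  refine and_congr_right fun _ => ?_
  constructor
  · intro h
    funext ⟨x, q⟩
    obtain ⟨h1, h2⟩ := h x q
    apply Prod.ext
    · funext t
      rw [h2]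
      simp [fixOf, modRule, negRule, sub_eq_add_neg]
    · rw [h1]
      simp [fixOf, modRule, negRule]
  · rintro rfl x q
    simp [fixOf, modRule, negRule, sub_eq_add_neg]

theorem negRule_neg {d n k : ℕ} (f : Rule d n k) : negRule (negRule f) = f := by
  funext x q
  simp [negRule]

theorem negRule_local {d n k : ℕ} {F F' : Finset (V d)} {f : Rule d n k}
    (h : ∀ x x' q, (∀ v ∈ F, x v = x' v) →
      (∀ v ∈ F', (f x q).1 v = (f x' q).1 v) ∧ (f x q).2 = (f x' q).2) :
    ∀ x x' q, (∀ v ∈ F, x v = x' v) →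
      (∀ v ∈ F', (negRule f x q).1 v = (negRule f x' q).1 v) ∧
        (negRule f x q).2 = (negRule f x' q).2 := by
  intro x x' q hx
  obtain ⟨h1, h2⟩ := h x x' q hx
  exact ⟨h1, by simp [negRule, h2]⟩

theorem pair_of_TM {d n k : ℕ} {T : X d n k → X d n k} (hT : IsTM T) :
    ∃ T', IsTMfix T' ∧ Pair T T' := by
  obtain ⟨F, F', f, h⟩ := hT
  obtain ⟨h1, h2⟩ := (definedBy_iff F F' f T).1 h
  refine ⟨fixOf (modRule F' f), ⟨F, F', negRule f, ?_⟩, modRule F' f, nice_modRule h1, h2, rfl⟩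
  rw [tapeDefinedBy_iff, negRule_neg]
  exact ⟨negRule_local h1, rfl⟩

theorem pair_of_TMfix {d n k : ℕ} {T' : Cfg d n k → Cfg d n k} (hT : IsTMfix T') :
    ∃ T, IsTM T ∧ Pair T T' := by
  obtain ⟨F, F', f, h⟩ := hT
  obtain ⟨h1, h2⟩ := (tapeDefinedBy_iff F F' f T').1 h
  have h3 := negRule_local h1
  refine ⟨headOf (modRule F' (negRule f)), ⟨F, F', negRule f, ?_⟩, modRule F' (negRule f),
    nice_modRule h3, desc_headOf _, h2⟩
  rw [definedBy_iff]
  exact ⟨h3, desc_headOf _⟩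

theorem pair_one {d n k : ℕ} : Pair (id : X d n k → X d n k) id := by
  refine ⟨fun x q => (x, q, 0), ⟨fun x q => ⟨∅, fun _ _ => rfl⟩,
    fun x q E => ⟨E, fun y hy => ⟨hy, rfl⟩⟩⟩, ⟨fun _ _ => rfl, ?_⟩, ?_⟩
  · intro x v q
    simp
  · funext ⟨x, q⟩
    simp [fixOf]

def compRule {d n k : ℕ} (g₂ g₁ : Rule d n k) : Rule d n k :=
  fun x q =>
    let r := g₁ x q
    let s := g₂ (fun t => r.1 (t + r.2.2)) r.2.1
    (fun t => s.1 (t - r.2.2), s.2.1, r.2.2 + s.2.2)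

theorem nice_comp {d n k : ℕ} {g₂ g₁ : Rule d n k} (h₂ : Nice g₂) (h₁ : Nice g₁) :
    Nice (compRule g₂ g₁) := by
  classical
  refine ⟨fun x q => ?_, fun x q E => ?_⟩
  · obtain ⟨D₁, hD₁⟩ := h₁.1 x q
    obtain ⟨D₂, hD₂⟩ := h₂.1 (fun t => (g₁ x q).1 (t + (g₁ x q).2.2)) (g₁ x q).2.1
    refine ⟨D₁ ∪ D₂.image (fun t => t + (g₁ x q).2.2), fun t ht => ?_⟩
    rw [Finset.mem_union, not_or] at ht
    simp only [compRule]
    rw [hD₂, sub_add_cancel, hD₁ t ht.1]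
    intro hm
    exact ht.2 (Finset.mem_image.2 ⟨_, hm, sub_add_cancel _ _⟩)
  · obtain ⟨F₂, hF₂⟩ := h₂.2 (fun t => (g₁ x q).1 (t + (g₁ x q).2.2)) (g₁ x q).2.1
      (E.image (fun t => t - (g₁ x q).2.2))
    obtain ⟨F₁, hF₁⟩ := h₁.2 x q (F₂.image (fun t => t + (g₁ x q).2.2))
    refine ⟨F₁, fun y hy => ?_⟩
    obtain ⟨ha, hb⟩ := hF₁ y hy
    obtain ⟨hc, he⟩ := hF₂ (fun t => (g₁ y q).1 (t + (g₁ x q).2.2))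
      (fun v hv => ha _ (Finset.mem_image_of_mem _ hv))
    simp only [compRule]
    rw [← hb, ← he]
    exact ⟨fun v hv => hc _ (Finset.mem_image_of_mem (fun t => t - (g₁ x q).2.2) hv), rfl⟩

theorem pair_comp {d n k : ℕ} {T₁ T₂ : X d n k → X d n k} {T₁' T₂' : Cfg d n k → Cfg d n k}
    (h₂ : Pair T₂ T₂') (h₁ : Pair T₁ T₁') : Pair (T₂ ∘ T₁) (T₂' ∘ T₁') := by
  obtain ⟨g₂, n₂, d₂, rfl⟩ := h₂
  obtain ⟨g₁, n₁, d₁, rfl⟩ := h₁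
  refine ⟨compRule g₂ g₁, nice_comp n₂ n₁, ⟨fun c hc => ?_, fun x v q => ?_⟩, ?_⟩
  · show T₂ (T₁ c) = c
    rw [d₁.1 c hc, d₂.1 c hc]
  · show T₂ (T₁ _) = _
    rw [d₁.2, d₂.2]
    have : ∀ (u w : V d), u + (v + w) - v = u + w := fun u w => by abel
    simp only [compRule, this, add_assoc, sub_sub]
  · funext ⟨x, q⟩
    have : ∀ (u v w : V d), u + (v + w) - v = u + w := fun u v w => by abel
    simp only [fixOf, compRule, Function.comp, this]

theorem pair_right_unique {d n k : ℕ} {T : X d n k → X d n k} {A B : Cfg d n k → Cfg d n k}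
    (hA : Pair T A) (hB : Pair T B) : A = B := by
  obtain ⟨g, -, dg, rfl⟩ := hA
  obtain ⟨h, -, dh, rfl⟩ := hB
  have : g = h := by
    funext x q
    have e := (dg.2 x 0 q).symm.trans (dh.2 x 0 q)
    simp only [add_zero, sub_zero, zero_add] at e
    obtain ⟨e1, e2, e3⟩ := embAt_inj e
    exact Prod.ext e1 (Prod.ext e3 e2)
  rw [this]

theorem exists_tape {d n : ℕ} (hn : 2 ≤ n) (w : V d) (hw : w ≠ 0) :
    ∃ z : V d → Fin n, ∀ t, z (t + w) ≠ z t := by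
  obtain ⟨i, hi⟩ := Function.ne_iff.1 hw
  have hi : w i ≠ 0 := hi
  refine ⟨fun t => if Even (t i / w i) then ⟨0, by omega⟩ else ⟨1, by omega⟩, fun t => ?_⟩
  have : (t + w) i / w i = t i / w i + 1 := by
    rw [Pi.add_apply, Int.add_ediv_of_dvd_right (dvd_refl _), Int.ediv_self hi]
  simp only [this, Int.even_add_one]
  split_ifs <;> simp_all

theorem pair_left_unique {d n k : ℕ} (hd : 1 ≤ d) (hn : 2 ≤ n)
    {S T : X d n k → X d n k} {A : Cfg d n k → Cfg d n k}
    (hS : Pair S A) (hT : Pair T A) : S = T := by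
  classical
  obtain ⟨g, ng, dg, rfl⟩ := hS
  obtain ⟨h, nh, dh, e⟩ := hT
  have e0 : ∀ x q, (g x q).2.1 = (h x q).2.1 ∧
      ∀ t, (g x q).1 (t + (g x q).2.2) = (h x q).1 (t + (h x q).2.2) := by
    intro x q
    have := congrFun e (x, q)
    exact ⟨congrArg Prod.snd this, fun t => congrFun (congrArg Prod.fst this) t⟩
  have e1 : ∀ x q, (g x q).2.2 = (h x q).2.2 := by
    intro x q
    by_contra hne
    obtain ⟨F, hF⟩ := ng.2 x q ∅
    obtain ⟨F', hF'⟩ := nh.2 x q ∅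
    obtain ⟨z, hz⟩ := exists_tape hn ((h x q).2.2 - (g x q).2.2)
      (sub_ne_zero.2 (Ne.symm hne))
    set G := F ∪ F' with hG
    set y : V d → Fin n := fun t => if t ∈ G then x t else z t with hy
    have hgy := (hF y (fun v hv => by simp [hy, hG, hv])).2
    have hhy := (hF' y (fun v hv => by simp [hy, hG, hv])).2
    obtain ⟨D, hD⟩ := ng.1 y q
    obtain ⟨D', hD'⟩ := nh.1 y q
    have : Nonempty (Fin d) := ⟨⟨0, hd⟩⟩
    have : Infinite (V d) := inferInstance
    obtain ⟨t, ht⟩ := Infinite.exists_notMem_finset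
      ((G ∪ D).image (fun t => t - (g x q).2.2) ∪ (G ∪ D').image (fun t => t - (h x q).2.2))
    have key : ∀ (E : Finset (V d)) (a : V d), t ∉ E.image (fun t => t - a) → t + a ∉ E := by
      intro E a h1 h2
      exact h1 (Finset.mem_image.2 ⟨_, h2, add_sub_cancel_right _ _⟩)
    rw [Finset.mem_union, not_or] at ht
    have k1 := key _ _ ht.1
    have k2 := key _ _ ht.2
    rw [Finset.mem_union, not_or] at k1 k2
    have := (e0 y q).2 t
    rw [← hgy, ← hhy, hD _ k1.2, hD' _ k2.2] at this
    simp only [hy, if_neg k1.1, if_neg k2.1] at this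
    apply hz (t + (g x q).2.2)
    rw [this]
    congr 1
    abel
  have : g = h := by
    funext x q
    refine Prod.ext ?_ (Prod.ext (e0 x q).1 (e1 x q))
    funext t
    have := (e0 x q).2 (t - (g x q).2.2)
    rwa [← e1, sub_add_cancel] at this
  subst this
  funext c
  rcases cases_cfg c with hc | ⟨x, v, q, rfl⟩
  · rw [dg.1 c hc, dh.1 c hc]
  · rw [dg.2, dh.2]

theorem psiRel_of_pair {d n k : ℕ} {T : X d n k → X d n k} {A : Cfg d n k → Cfg d n k}
    (h : Pair T A) : PsiRel T A := by
  obtain ⟨g, -, dg, rfl⟩ := h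
  intro x q v q' hv
  rw [emb_eq, dg.2] at hv ⊢
  simp only [embAt, add_zero, zero_add, sub_zero] at hv ⊢
  split_ifs at hv with hvv
  · simp only [Option.some.injEq] at hv
    rw [hvv, ← hv]
    rfl

theorem exists_fix {d n k : ℕ} (T : Function.End (X d n k)) (hT : T ∈ TMmon d n k) :
    ∃ A : Function.End (Cfg d n k), A ∈ TMfixmon d n k ∧ Pair T A := by
  unfold TMmon at hT
  induction hT using Submonoid.closure_induction with
  | mem T h =>
    obtain ⟨A, hA, hp⟩ := pair_of_TM h
    exact ⟨A, Submonoid.subset_closure hA, hp⟩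
  | one => exact ⟨1, one_mem _, pair_one⟩
  | mul S T _ _ hS hT =>
    obtain ⟨A, hA, pA⟩ := hS
    obtain ⟨B, hB, pB⟩ := hT
    exact ⟨A * B, mul_mem hA hB, pair_comp pA pB⟩

theorem exists_head {d n k : ℕ} (A : Function.End (Cfg d n k)) (hA : A ∈ TMfixmon d n k) :
    ∃ T : Function.End (X d n k), T ∈ TMmon d n k ∧ Pair T A := by
  unfold TMfixmon at hA
  induction hA using Submonoid.closure_induction with
  | mem A h =>
    obtain ⟨T, hT, hp⟩ := pair_of_TMfix h
    exact ⟨T, Submonoid.subset_closure hT, hp⟩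
  | one => exact ⟨1, one_mem _, pair_one⟩
  | mul S T _ _ hS hT =>
    obtain ⟨A, hA, pA⟩ := hS
    obtain ⟨B, hB, pB⟩ := hT
    exact ⟨A * B, mul_mem hA hB, pair_comp pA pB⟩

end PsiAux

/-- For `n ≥ 2` the canonical map `Ψ` is an isomorphism of monoids
`TM(ℤ^d,n,k) ≅ TM_fix(ℤ^d,n,k)`, which restricts to a group isomorphism
`RTM(ℤ^d,n,k) ≅ RTM_fix(ℤ^d,n,k)` (reversible machines correspond to reversible
machines). -/
theorem psi_monoid_iso (d n k : ℕ) (hd : 1 ≤ d) (hn : 2 ≤ n) (hk : 1 ≤ k) :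
    ∃ e : TMmon d n k ≃* TMfixmon d n k,
      (∀ T : TMmon d n k,
        PsiRel (T.val : X d n k → X d n k) ((e T).val : Cfg d n k → Cfg d n k)) ∧
      (∀ T : TMmon d n k,
        (∃ S : X d n k → X d n k, IsTM S ∧
            S ∘ (T.val : X d n k → X d n k) = id ∧ (T.val : X d n k → X d n k) ∘ S = id) ↔
        (∃ S' : Cfg d n k → Cfg d n k, IsTMfix S' ∧
            S' ∘ ((e T).val : Cfg d n k → Cfg d n k) = id ∧
            ((e T).val : Cfg d n k → Cfg d n k) ∘ S' = id)) := by
  choose φ hφm hφ using @PsiAux.exists_fix d n k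
  choose ψ hψm hψ using @PsiAux.exists_head d n k
  let e : TMmon d n k ≃* TMfixmon d n k :=
    { toFun := fun T => ⟨φ T.1 T.2, hφm _ _⟩
      invFun := fun A => ⟨ψ A.1 A.2, hψm _ _⟩
      left_inv := fun T => Subtype.ext
        (PsiAux.pair_left_unique hd hn (hψ _ _) (hφ T.1 T.2))
      right_inv := fun A => Subtype.ext
        (PsiAux.pair_right_unique (hφ _ _) (hψ A.1 A.2))
      map_mul' := fun S T => Subtype.ext <| by
        have h := PsiAux.pair_comp (hφ S.1 S.2) (hφ T.1 T.2)
        exact PsiAux.pair_right_unique (hφ (S * T).1 (S * T).2) h }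
  have he : ∀ T : TMmon d n k, PsiAux.Pair (T.val : X d n k → X d n k)
    ((e T).val : Cfg d n k → Cfg d n k) := fun T => hφ T.1 T.2
  refine ⟨e, fun T => PsiAux.psiRel_of_pair (he T), fun T => ⟨?_, ?_⟩⟩
  · rintro ⟨S, hS, h1, h2⟩
    obtain ⟨A, hA, hp⟩ := PsiAux.pair_of_TM hS
    refine ⟨A, hA, ?_, ?_⟩
    · have := PsiAux.pair_comp hp (he T)
      rw [h1] at this
      exact PsiAux.pair_right_unique this PsiAux.pair_one
    · have := PsiAux.pair_comp (he T) hp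
      rw [h2] at this
      exact PsiAux.pair_right_unique this PsiAux.pair_one
  · rintro ⟨A, hA, h1, h2⟩
    obtain ⟨S, hS, hp⟩ := PsiAux.pair_of_TMfix hA
    refine ⟨S, hS, ?_, ?_⟩
    · have := PsiAux.pair_comp hp (he T)
      rw [h1] at this
      exact PsiAux.pair_left_unique hd hn this PsiAux.pair_one
    · have := PsiAux.pair_comp (he T) hp
      rw [h2] at this
      exact PsiAux.pair_left_unique hd hn this PsiAux.pair_one
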